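/- Let m ≥ 6 be an integer and let θ ∈ (2π/m, 2π/(m−1)). If B is a K_θ-primitive matrix with γ(B) = 2m − 1, then B is a positive scalar multiple of A_θ. In other words, up to positive scalar multiples, A_θ is the only K_θ-primitive matrix whose exponent equals 2m − 1. -/

import Mathlib

open Matrix Set Real

noncomputable section

/-- A proper cone in `ℝ^n`: a closed convex cone that is pointed and full. -/
def IsProperCone {n : ℕ} (K : Set (Fin n → ℝ)) : Prop :=
  IsClosed K ∧ (∀ x ∈ K, ∀ y ∈ K, x + y ∈ K) ∧
    (∀ (c : ℝ), 0 ≤ c → ∀ x ∈ K, c • x ∈ K) ∧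
    K ∩ (-K) = {0} ∧ (interior K).Nonempty

/-- The positive hull (cone generated by) finitely many vectors. -/
def ConeGen {n m : ℕ} (y : Fin m → Fin n → ℝ) : Set (Fin n → ℝ) :=
  {x | ∃ c : Fin m → ℝ, (∀ j, 0 ≤ c j) ∧ x = ∑ j, c j • y j}

/-- A polyhedral cone: a proper cone that is the positive hull of finitely many vectors. -/
def IsPolyhedralCone {n : ℕ} (K : Set (Fin n → ℝ)) : Prop :=
  IsProperCone K ∧ ∃ (m : ℕ) (y : Fin m → Fin n → ℝ), K = ConeGen y

/-- `A` is `K`-nonnegative: `A K ⊆ K`. -/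
def KNonneg {n : ℕ} (K : Set (Fin n → ℝ)) (A : Matrix (Fin n) (Fin n) ℝ) : Prop :=
  ∀ x ∈ K, A.mulVec x ∈ K

/-- `A` is `K`-positive: `A` maps `K \ {0}` into the interior of `K`. -/
def KPositive {n : ℕ} (K : Set (Fin n → ℝ)) (A : Matrix (Fin n) (Fin n) ℝ) : Prop :=
  ∀ x ∈ K, x ≠ 0 → A.mulVec x ∈ interior K

/-- `A` is `K`-primitive: `A` is `K`-nonnegative and some power of `A` is `K`-positive. -/
def KPrimitive {n : ℕ} (K : Set (Fin n → ℝ)) (A : Matrix (Fin n) (Fin n) ℝ) : Prop :=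
  KNonneg K A ∧ ∃ k : ℕ, 0 < k ∧ KPositive K (A ^ k)

/-- The exponent `γ(A)` of a `K`-primitive matrix: the least `k ≥ 1` with `A^k` `K`-positive. -/
def expnt {n : ℕ} (K : Set (Fin n → ℝ)) (A : Matrix (Fin n) (Fin n) ℝ) : ℕ :=
  sInf {k : ℕ | 0 < k ∧ KPositive K (A ^ k)}

/-- `x` is an extreme vector of `K`. -/
def IsExtremeVec {n : ℕ} (K : Set (Fin n → ℝ)) (x : Fin n → ℝ) : Prop :=
  x ∈ K ∧ x ≠ 0 ∧ ∀ y ∈ K, ∀ z ∈ K, x = y + z →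
    (∃ a : ℝ, 0 ≤ a ∧ y = a • x) ∧ (∃ b : ℝ, 0 ≤ b ∧ z = b • x)

/-- The set of extreme rays of `K`. -/
def ExtremeRays {n : ℕ} (K : Set (Fin n → ℝ)) : Set (Set (Fin n → ℝ)) :=
  {R | ∃ x, IsExtremeVec K x ∧ R = {y | ∃ c : ℝ, 0 ≤ c ∧ y = c • x}}

/-- `K ∈ P(m,n)`: an `n`-dimensional polyhedral cone in `ℝ^n` with exactly `m` extreme rays.
(A proper cone in `ℝ^n` has nonempty interior, hence is automatically `n`-dimensional.) -/
def MemP {n : ℕ} (m : ℕ) (K : Set (Fin n → ℝ)) : Prop :=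
  IsPolyhedralCone K ∧ (ExtremeRays K).ncard = m

/-- A face of a cone `K`. -/
def IsFace {n : ℕ} (K F : Set (Fin n → ℝ)) : Prop :=
  0 ∈ F ∧ F ⊆ K ∧ (∀ x ∈ F, ∀ y ∈ F, x + y ∈ F) ∧
    (∀ (c : ℝ), 0 ≤ c → ∀ x ∈ F, c • x ∈ F) ∧
    ∀ x ∈ F, ∀ y ∈ K, x - y ∈ K → y ∈ F

/-- `A` is `K`-irreducible: `A` is `K`-nonnegative and leaves invariant no nontrivial face. -/
def KIrreducible {n : ℕ} (K : Set (Fin n → ℝ)) (A : Matrix (Fin n) (Fin n) ℝ) : Prop :=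
  KNonneg K A ∧ ∀ F : Set (Fin n → ℝ), IsFace K F → (∀ x ∈ F, A.mulVec x ∈ F) →
    F = ({0} : Set (Fin n → ℝ)) ∨ F = K

/-- The polynomial `g_θ(t) = (sin((m-1)θ)/sin θ)·t^m - (sin(mθ)/sin θ)·t^{m-1} + 1`. -/
def gpoly (m : ℕ) (θ t : ℝ) : ℝ :=
  (Real.sin (((m : ℝ) - 1) * θ) / Real.sin θ) * t ^ m
    - (Real.sin ((m : ℝ) * θ) / Real.sin θ) * t ^ (m - 1) + 1

/-- The vector `x_{j+1}(θ) = (r^j cos(jθ), r^j sin(jθ), 1)ᵀ` (indexed from `j = 0`). -/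
def xvec (r θ : ℝ) (j : ℕ) : Fin 3 → ℝ :=
  ![r ^ j * Real.cos ((j : ℝ) * θ), r ^ j * Real.sin ((j : ℝ) * θ), 1]

/-- The cone `K_θ` generated by `x_1(θ), …, x_m(θ)` (with `r` the positive root of `g_θ`). -/
def Ktheta (m : ℕ) (r θ : ℝ) : Set (Fin 3 → ℝ) :=
  ConeGen (fun j : Fin m => xvec r θ j.val)

/-- The matrix `A_θ = r·[[cos θ, -sin θ],[sin θ, cos θ]] ⊕ [1]`. -/
def Atheta (r θ : ℝ) : Matrix (Fin 3) (Fin 3) ℝ :=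
  !![r * Real.cos θ, -(r * Real.sin θ), 0;
     r * Real.sin θ,    r * Real.cos θ, 0;
     0, 0, 1]

/-!
Let `B` have exponent `2m - 1`. Some extreme vector of `K_θ` then has an orbit that avoids the
interior of the cone up to time `2m - 2`. If one point of an orbit dominates a later one in the
order of the cone, then it is already interior; so this orbit meets every open ray and every open
side of the polygon at most once. Counting forces it to visit all `m` vertices first and then
`m - 1` sides, and since `B` maps sides into sides, consecutive vertices of the orbit are adjacent.
Thus, with one exception, `B` shifts the vertices cyclically by `+1` or by `-1`.

The matrix `A_θ` shifts the vertices by `+1`, except that the last one goes to a point inside the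
side from `x_1` to `x_2`. If `B` shifts by `+1`, then `B⁻¹ A_θ` fixes at least `m - 2 ≥ 4` of the
extreme rays, any three of which are linearly independent, so it is a scalar matrix. If `B` shifts
by `-1`, then `B A_θ` is a scalar matrix in the same way, which is impossible since the nonsingular
`B` would map a point inside a side to an extreme ray.
-/

section Cone

variable {E : Type*} [AddCommGroup E] [Module ℝ E] {K : PointedCone ℝ E} {x y z : E} {c : ℝ}

/-- `Dominates K x y` says that `y ≤ c • x` for some `c > 0`, in the preorder induced by the cone
`K`. For `x, y ∈ K` it means that every face of `K` containing `x` contains `y`. -/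
def Dominates (K : PointedCone ℝ E) (x y : E) : Prop :=
  ∃ c : ℝ, 0 < c ∧ c • x - y ∈ K

namespace Dominates

lemma refl (K : PointedCone ℝ E) (x : E) : Dominates K x x :=
  ⟨1, one_pos, by simp⟩

lemma trans (hxy : Dominates K x y) (hyz : Dominates K y z) : Dominates K x z := by
  obtain ⟨a, ha, hxy⟩ := hxy
  obtain ⟨b, hb, hyz⟩ := hyz
  refine ⟨b * a, mul_pos hb ha, ?_⟩
  convert K.add_mem (K.smul_mem hb.le hxy) hyz using 1
  module

lemma smul_left (hc : 0 < c) (h : Dominates K x y) : Dominates K (c • x) y := by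
  obtain ⟨a, ha, h⟩ := h
  refine ⟨a / c, div_pos ha hc, ?_⟩
  rwa [smul_smul, div_mul_cancel₀ a hc.ne']

lemma smul_right (hc : 0 < c) (h : Dominates K x y) : Dominates K x (c • y) := by
  obtain ⟨a, ha, h⟩ := h
  refine ⟨c * a, mul_pos hc ha, ?_⟩
  simpa only [smul_sub, smul_smul] using K.smul_mem hc.le h

lemma add_right (hy : Dominates K x y) (hz : Dominates K x z) : Dominates K x (y + z) := by
  obtain ⟨a, ha, hy⟩ := hy
  obtain ⟨b, hb, hz⟩ := hz
  refine ⟨a + b, add_pos ha hb, ?_⟩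
  convert K.add_mem hy hz using 1
  module

lemma add_left (hy : y ∈ K) : Dominates K (x + y) x :=
  ⟨1, one_pos, by simpa using hy⟩

lemma apply_pos {φ : Module.Dual ℝ E} (hφ : ∀ z ∈ K, 0 ≤ φ z) (h : Dominates K x y)
    (hy : 0 < φ y) : 0 < φ x := by
  obtain ⟨a, ha, h⟩ := h
  have hle : 0 ≤ a * φ x - φ y := by simpa using hφ _ h
  exact pos_of_mul_pos_right (by linarith) ha.le

lemma apply_eq_zero {φ : Module.Dual ℝ E} (hφ : ∀ z ∈ K, 0 ≤ φ z) (h : Dominates K x y)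
    (hy : y ∈ K) (hx : φ x = 0) : φ y = 0 := by
  by_contra hne
  exact (h.apply_pos hφ ((hφ y hy).lt_of_ne' hne)).ne' hx

end Dominates

variable [TopologicalSpace E]

lemma add_mem_interior_cone [ContinuousAdd E] (hx : x ∈ interior (K : Set E)) (hy : y ∈ K) :
    x + y ∈ interior (K : Set E) := by
  refine interior_mono ?_ (subset_interior_add_left (Set.add_mem_add hx hy))
  rintro _ ⟨u, hu, v, hv, rfl⟩
  exact K.add_mem hu hv

lemma smul_mem_interior_cone [ContinuousConstSMul ℝ E] (hc : 0 < c)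
    (hx : x ∈ interior (K : Set E)) : c • x ∈ interior (K : Set E) := by
  refine interior_mono ?_ ((interior_smul₀ hc.ne' (K : Set E)).symm ▸ Set.smul_mem_smul_set hx)
  rintro _ ⟨u, hu, rfl⟩
  exact K.smul_mem hc.le hu

lemma Dominates.mem_interior [ContinuousAdd E] [ContinuousConstSMul ℝ E] (h : Dominates K x y)
    (hy : y ∈ interior (K : Set E)) : x ∈ interior (K : Set E) := by
  obtain ⟨a, ha, h⟩ := h
  have hax : a • x ∈ interior (K : Set E) := by
    simpa using add_mem_interior_cone hy h
  simpa [smul_smul, ha.ne'] using smul_mem_interior_cone (inv_pos.2 ha) hax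

lemma dominates_of_mem_interior [IsTopologicalAddGroup E] [ContinuousSMul ℝ E]
    (hx : x ∈ interior (K : Set E)) (y : E) : Dominates K x y := by
  have hcont : Filter.Tendsto (fun t : ℝ => x - t • y) (nhdsWithin 0 (Ioi 0)) (nhds x) := by
    have : Continuous fun t : ℝ => x - t • y := by fun_prop
    simpa using (this.tendsto 0).mono_left nhdsWithin_le_nhds
  obtain ⟨t, ht, ht0⟩ :=
    ((hcont.eventually (mem_interior_iff_mem_nhds.1 hx)).and self_mem_nhdsWithin).exists
  refine ⟨t⁻¹, inv_pos.2 ht0, ?_⟩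
  have hmem := K.smul_mem (inv_pos.2 ht0).le ht
  rwa [smul_sub, inv_smul_smul₀ (ne_of_gt ht0)] at hmem

end Cone

section PrimitiveMatrix

variable {d : ℕ} {K : PointedCone ℝ (Fin d → ℝ)} {B : Matrix (Fin d) (Fin d) ℝ}
  {x y : Fin d → ℝ}

lemma coneGen_eq_hull {m : ℕ} (X : Fin m → Fin d → ℝ) :
    ConeGen X = PointedCone.hull ℝ (range X) := by
  ext x
  simp only [ConeGen, mem_ofPred_eq, SetLike.mem_coe, PointedCone.hull,
    Submodule.mem_span_range_iff_exists_fun]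
  constructor
  · rintro ⟨c, hc, rfl⟩
    exact ⟨fun j => ⟨c j, hc j⟩, rfl⟩
  · rintro ⟨c, rfl⟩
    exact ⟨fun j => c j, fun j => (c j).2, rfl⟩

lemma pow_succ_mulVec (B : Matrix (Fin d) (Fin d) ℝ) (k : ℕ) (x : Fin d → ℝ) :
    B ^ (k + 1) *ᵥ x = B *ᵥ (B ^ k *ᵥ x) := by
  rw [pow_succ', mulVec_mulVec]

lemma KNonneg.pow {K : Set (Fin d → ℝ)} (hB : KNonneg K B) (k : ℕ) : KNonneg K (B ^ k) := by
  induction k with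
  | zero => simp [KNonneg]
  | succ k ih => exact fun x hx => pow_succ_mulVec B k x ▸ hB _ (ih x hx)

lemma Dominates.mulVec (hB : KNonneg K B) (h : Dominates K x y) :
    Dominates K (B *ᵥ x) (B *ᵥ y) := by
  obtain ⟨a, ha, h⟩ := h
  exact ⟨a, ha, by simpa [mulVec_sub, mulVec_smul] using hB _ h⟩

namespace KPrimitive

lemma mulVec_mem_interior (hB : KPrimitive K B) (hx : x ∈ interior (K : Set (Fin d → ℝ))) :
    B *ᵥ x ∈ interior (K : Set (Fin d → ℝ)) := by
  rcases eq_or_ne x 0 with rfl | hx0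
  · rwa [mulVec_zero]
  obtain ⟨k, hk, hpos⟩ := hB.2
  obtain ⟨j, rfl⟩ := Nat.exists_eq_succ_of_ne_zero hk.ne'
  have hdom := (dominates_of_mem_interior hx (B ^ j *ᵥ x)).mulVec hB.1
  rw [← pow_succ_mulVec] at hdom
  exact hdom.mem_interior (hpos x (interior_subset hx) hx0)

lemma pow_mulVec_mem_interior_of_le (hB : KPrimitive K B) {j k : ℕ} (hjk : j ≤ k)
    (hj : B ^ j *ᵥ x ∈ interior (K : Set (Fin d → ℝ))) :
    B ^ k *ᵥ x ∈ interior (K : Set (Fin d → ℝ)) := by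
  induction k, hjk using Nat.le_induction with
  | base => exact hj
  | succ k _ ih => exact pow_succ_mulVec B k x ▸ hB.mulVec_mem_interior ih

lemma exists_forall_pow_mulVec_mem_interior (hB : KPrimitive K B) (hx : x ∈ K) (hx0 : x ≠ 0) :
    ∃ N, ∀ k ≥ N, B ^ k *ᵥ x ∈ interior (K : Set (Fin d → ℝ)) := by
  obtain ⟨N, -, hpos⟩ := hB.2
  exact ⟨N, fun _ hk => hB.pow_mulVec_mem_interior_of_le hk (hpos x hx hx0)⟩

lemma mem_interior_of_dominates (hB : KPrimitive K B) (hx : x ∈ K) (hx0 : x ≠ 0) {k l : ℕ}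
    (hkl : k < l) (hdom : Dominates K (B ^ k *ᵥ x) (B ^ l *ᵥ x)) :
    B ^ k *ᵥ x ∈ interior (K : Set (Fin d → ℝ)) := by
  obtain ⟨p, rfl⟩ := exists_add_of_le hkl.le
  have hiter (j : ℕ) : Dominates K (B ^ k *ᵥ x) (B ^ (k + j * p) *ᵥ x) := by
    induction j with
    | zero => simpa using Dominates.refl K _
    | succ j ih =>
      refine hdom.trans ?_
      convert ih.mulVec (hB.1.pow p) using 1 <;>
        rw [mulVec_mulVec, ← pow_add] <;> congr 2 <;> ring
  obtain ⟨N, hN⟩ := hB.exists_forall_pow_mulVec_mem_interior hx hx0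
  exact (hiter N).mem_interior (hN _ (le_add_left (Nat.le_mul_of_pos_right N (by omega))))

end KPrimitive

lemma kPositive_hull {s : Set (Fin d → ℝ)}
    (hs : ∀ x ∈ s, B *ᵥ x ∈ interior (PointedCone.hull ℝ s : Set (Fin d → ℝ))) :
    KPositive (PointedCone.hull ℝ s) B := by
  suffices h : ∀ x ∈ PointedCone.hull ℝ s,
      x = 0 ∨ B *ᵥ x ∈ interior (PointedCone.hull ℝ s : Set (Fin d → ℝ)) from
    fun x hx hx0 => (h x hx).resolve_left hx0
  intro x hx
  induction hx using Submodule.span_induction with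
  | mem x hx => exact .inr (hs x hx)
  | zero => exact .inl rfl
  | add x y _ _ hx hy =>
    rcases hx with rfl | hx
    · simpa using hy
    rcases hy with rfl | hy
    · simpa using Or.inr hx
    · exact .inr (by rw [mulVec_add]; exact add_mem_interior_cone hx (interior_subset hy))
  | smul c x _ hx =>
    rcases hx with rfl | hx
    · simp
    rcases c.2.eq_or_lt with hc | hc
    · exact .inl (by rw [show c = 0 from Subtype.ext hc.symm, zero_smul])
    · exact .inr (by simpa [Nonneg.mk_smul, mulVec_smul] using smul_mem_interior_cone hc hx)

lemma exists_forall_le_notMem_interior_of_lt_expnt {s : Set (Fin d → ℝ)}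
    (hB : KPrimitive (PointedCone.hull ℝ s) B) {N : ℕ} (hN0 : 0 < N)
    (hN : N < expnt (PointedCone.hull ℝ s) B) :
    ∃ x ∈ s, ∀ k ≤ N, B ^ k *ᵥ x ∉ interior (PointedCone.hull ℝ s : Set (Fin d → ℝ)) := by
  by_contra! h
  refine Nat.notMem_of_lt_sInf hN ⟨hN0, kPositive_hull fun x hx => ?_⟩
  obtain ⟨k, hk, hint⟩ := h x hx
  exact hB.pow_mulVec_mem_interior_of_le hk hint

lemma exists_pow_three_eq_of_det_eq_zero {B : Matrix (Fin 3) (Fin 3) ℝ} (hdet : B.det = 0) :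
    ∃ t s : ℝ, B ^ 3 = t • B ^ 2 + s • B := by
  have hcayley := B.aeval_self_charpoly
  have hlead : B.charpoly.coeff 3 = 1 := by
    simpa [Matrix.charpoly_natDegree_eq_dim] using B.charpoly_monic.coeff_natDegree
  have hconst : B.charpoly.coeff 0 = 0 := by
    simpa [hdet] using B.det_eq_sign_charpoly_coeff
  simp only [Polynomial.aeval_eq_sum_range, Matrix.charpoly_natDegree_eq_dim, Fintype.card_fin,
    Finset.sum_range_succ, Finset.sum_range_zero, hlead, hconst, zero_smul, one_smul, pow_one,
    zero_add] at hcayley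
  refine ⟨-B.charpoly.coeff 2, -B.charpoly.coeff 1, ?_⟩
  rw [← sub_eq_zero, ← hcayley]
  module

lemma KPrimitive.pow_three_mulVec_mem_interior_of_det_eq_zero
    {K : PointedCone ℝ (Fin 3 → ℝ)} {B : Matrix (Fin 3) (Fin 3) ℝ} {x : Fin 3 → ℝ}
    (hB : KPrimitive K B) (hdet : B.det = 0) (hx : x ∈ K) (hx0 : x ≠ 0) :
    B ^ 3 *ᵥ x ∈ interior (K : Set (Fin 3 → ℝ)) := by
  obtain ⟨t, s, hBts⟩ := exists_pow_three_eq_of_det_eq_zero hdet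
  have hmem (k : ℕ) : B ^ k *ᵥ x ∈ K := hB.1.pow k x hx
  have hrec (k : ℕ) : B ^ (k + 3) *ᵥ x = t • (B ^ (k + 2) *ᵥ x) + s • (B ^ (k + 1) *ᵥ x) := by
    rw [pow_add, hBts, mul_add, mul_smul_comm, mul_smul_comm, ← pow_add, ← pow_succ, add_mulVec,
      smul_mulVec, smul_mulVec]
  rcases le_or_gt t 0 with ht | ht
  · have hdom : Dominates K (B ^ 1 *ᵥ x) (B ^ 3 *ᵥ x) := by
      refine ⟨|s| + 1, by positivity, ?_⟩
      convert K.add_mem (K.smul_mem (r := |s| + 1 - s) (by linarith [le_abs_self s]) (hmem 1))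
        (K.smul_mem (neg_nonneg.2 ht) (hmem 2)) using 1
      rw [hrec 0]
      module
    exact hB.pow_mulVec_mem_interior_of_le (by decide)
      (hB.mem_interior_of_dominates hx hx0 (by decide) hdom)
  rcases le_or_gt s 0 with hs | hs
  · have hdom : Dominates K (B ^ 2 *ᵥ x) (B ^ 3 *ᵥ x) := by
      refine ⟨t, ht, ?_⟩
      convert K.smul_mem (neg_nonneg.2 hs) (hmem 1) using 1
      rw [hrec 0]
      module
    exact hB.pow_mulVec_mem_interior_of_le (by decide)
      (hB.mem_interior_of_dominates hx hx0 (by decide) hdom)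
  · have hdom : Dominates K (B ^ 3 *ᵥ x) (B ^ 2 *ᵥ x) := by
      rw [hrec 0]
      exact (Dominates.add_left (K.smul_mem hs.le (hmem 1))).trans
        ((Dominates.refl K _).smul_left ht)
    refine hB.mem_interior_of_dominates hx hx0 (l := 4) (by decide) ?_
    rw [hrec 1]
    exact ((Dominates.refl K _).smul_right ht).add_right (hdom.smul_right hs)

end PrimitiveMatrix

section TripleProduct

/-- The scalar triple product `det [a, b, c]`, as a linear functional of `c`. When `a` and `b` are
consecutive vertices of a convex polygon, it is the supporting functional of the side through
them. -/
def triple (a b : Fin 3 → ℝ) : Module.Dual ℝ (Fin 3 → ℝ) :=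
  dotProductEquiv ℝ (Fin 3) (a ⨯₃ b)

lemma triple_apply (a b c : Fin 3 → ℝ) :
    triple a b c = a 0 * (b 1 * c 2 - b 2 * c 1) + a 1 * (b 2 * c 0 - b 0 * c 2)
      + a 2 * (b 0 * c 1 - b 1 * c 0) := by
  simp only [triple, dotProductEquiv_apply_apply, cross_apply, vec3_dotProduct, cons_val]
  ring

lemma triple_rotate (a b c : Fin 3 → ℝ) : triple a b c = triple b c a := by
  simp only [triple_apply]
  ring

lemma triple_swap (a b c : Fin 3 → ℝ) : triple a b c = -triple b a c := by
  simp only [triple_apply]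
  ring

lemma triple_self_right (a b : Fin 3 → ℝ) : triple a b b = 0 := by
  simp only [triple_apply]
  ring

lemma triple_self_left (a b : Fin 3 → ℝ) : triple a b a = 0 := by
  rw [triple_swap, triple_self_right, neg_zero]

lemma triple_self (a : Fin 3 → ℝ) : triple a a = 0 := by
  simp [triple]

lemma triple_smul_smul_self (p q : ℝ) (a : Fin 3 → ℝ) : triple (p • a) (q • a) = 0 := by
  simp [triple]

lemma triple_mulVec (B : Matrix (Fin 3) (Fin 3) ℝ) (a b c : Fin 3 → ℝ) :
    triple (B *ᵥ a) (B *ᵥ b) (B *ᵥ c) = B.det * triple a b c := by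
  simp only [triple_apply, det_fin_three, mulVec, vec3_dotProduct]
  ring

lemma triple_smul_eq (a b c y : Fin 3 → ℝ) :
    triple a b c • y = triple b c y • a + triple c a y • b + triple a b y • c := by
  ext i
  simp only [triple_apply, Pi.add_apply, Pi.smul_apply, smul_eq_mul]
  fin_cases i <;> simp only [Fin.zero_eta, Fin.mk_one, Fin.reduceFinMk] <;> ring

end TripleProduct

section ConvexPolygon

variable {n : ℕ} {X : Fin (n + 1) → Fin 3 → ℝ} {i j : Fin (n + 1)} {y z : Fin 3 → ℝ}

/-- The vectors `X 0, …, X n` generate the extreme rays, in counterclockwise order, of the cone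
over a convex polygon with `n + 1 ≥ 3` vertices. -/
structure IsConvexPolygon (X : Fin (n + 1) → Fin 3 → ℝ) : Prop where
  two_le : 2 ≤ n
  triple_pos : ∀ i j k, i < j → j < k → 0 < triple (X i) (X j) (X k)

/-- The cone over the polygon with vertices `X i`. -/
abbrev vertexCone (X : Fin (n + 1) → Fin 3 → ℝ) : PointedCone ℝ (Fin 3 → ℝ) :=
  PointedCone.hull ℝ (range X)

/-- The functional supporting the cone over a polygon along the side from `X i` to `X (i + 1)`,
where indices are cyclic. -/
def facet (X : Fin (n + 1) → Fin 3 → ℝ) (i : Fin (n + 1)) : Module.Dual ℝ (Fin 3 → ℝ) :=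
  triple (X i) (X (i + 1))

/-- `y` spans the same open ray as the vertex `X j`. -/
def OnRay (X : Fin (n + 1) → Fin 3 → ℝ) (j : Fin (n + 1)) (y : Fin 3 → ℝ) : Prop :=
  ∃ p : ℝ, 0 < p ∧ y = p • X j

/-- `y` lies in the relative interior of the two-dimensional face spanned by the consecutive
vertices `X j` and `X (j + 1)`. -/
def OnEdge (X : Fin (n + 1) → Fin 3 → ℝ) (j : Fin (n + 1)) (y : Fin 3 → ℝ) : Prop :=
  ∃ p q : ℝ, 0 < p ∧ 0 < q ∧ y = p • X j + q • X (j + 1)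

lemma vertex_mem_vertexCone (X : Fin (n + 1) → Fin 3 → ℝ) (i : Fin (n + 1)) :
    X i ∈ vertexCone X :=
  PointedCone.subset_hull (mem_range_self i)

lemma facet_self (X : Fin (n + 1) → Fin 3 → ℝ) (i : Fin (n + 1)) : facet X i (X i) = 0 :=
  triple_self_left _ _

lemma facet_succ (X : Fin (n + 1) → Fin 3 → ℝ) (i : Fin (n + 1)) :
    facet X i (X (i + 1)) = 0 :=
  triple_self_right _ _

lemma OnRay.dominates (K : PointedCone ℝ (Fin 3 → ℝ)) (hy : OnRay X j y) (hz : OnRay X j z) :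
    Dominates K y z := by
  obtain ⟨p, hp, rfl⟩ := hy
  obtain ⟨q, hq, rfl⟩ := hz
  exact ((Dominates.refl K (X j)).smul_left hp).smul_right hq

lemma OnEdge.dominates_left (h : OnEdge X j y) : Dominates (vertexCone X) y (X j) := by
  obtain ⟨p, q, hp, hq, rfl⟩ := h
  exact (Dominates.add_left ((vertexCone X).smul_mem hq.le (vertex_mem_vertexCone X _))).trans
    ((Dominates.refl _ _).smul_left hp)

lemma OnEdge.dominates_right (h : OnEdge X j y) : Dominates (vertexCone X) y (X (j + 1)) := by
  obtain ⟨p, q, hp, hq, rfl⟩ := h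
  rw [add_comm]
  exact (Dominates.add_left ((vertexCone X).smul_mem hp.le (vertex_mem_vertexCone X _))).trans
    ((Dominates.refl _ _).smul_left hq)

lemma OnEdge.dominates (hy : OnEdge X j y) (hz : OnEdge X j z) :
    Dominates (vertexCone X) y z := by
  obtain ⟨p, q, hp, hq, rfl⟩ := hz
  exact (hy.dominates_left.smul_right hp).add_right (hy.dominates_right.smul_right hq)

namespace IsConvexPolygon

lemma add_one_ne_self (hX : IsConvexPolygon X) (i : Fin (n + 1)) : i + 1 ≠ i := by
  have := hX.two_le
  simp only [ne_eq, add_eq_left, Fin.one_eq_zero_iff]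
  omega

lemma add_one_add_one_ne_self (hX : IsConvexPolygon X) (i : Fin (n + 1)) : i + 1 + 1 ≠ i := by
  have := hX.two_le
  rw [add_assoc, ne_eq, add_eq_left, Fin.ext_iff, Fin.val_add, Fin.val_one', Fin.val_zero,
    Nat.mod_eq_of_lt (a := 1) (by omega), Nat.mod_eq_of_lt (by omega)]
  decide

lemma facet_pos (hX : IsConvexPolygon X) (hji : j ≠ i) (hji' : j ≠ i + 1) :
    0 < facet X i (X j) := by
  unfold facet
  induction i using Fin.lastCases with
  | last =>
    rw [Fin.last_add_one] at hji' ⊢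
    rw [triple_rotate]
    exact hX.triple_pos _ _ _ (Fin.pos_iff_ne_zero.2 hji') (Fin.lt_last_iff_ne_last.2 hji)
  | cast i =>
    rw [Fin.coeSucc_eq_succ] at hji' ⊢
    rcases hji.lt_or_gt with hlt | hgt
    · rw [← triple_rotate]
      exact hX.triple_pos _ _ _ hlt Fin.castSucc_lt_succ
    · exact hX.triple_pos _ _ _ Fin.castSucc_lt_succ
        (lt_of_le_of_ne (Fin.castSucc_lt_iff_succ_le.1 hgt) hji'.symm)

lemma vertex_ne_zero (hX : IsConvexPolygon X) (i : Fin (n + 1)) : X i ≠ 0 := fun h => by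
  have hpos := hX.facet_pos (hX.add_one_ne_self i).symm (hX.add_one_add_one_ne_self i).symm
  rw [h, map_zero] at hpos
  exact hpos.false

lemma facet_vertex_eq_zero_iff (hX : IsConvexPolygon X) :
    facet X i (X j) = 0 ↔ j = i ∨ j = i + 1 := by
  refine ⟨fun h => ?_, ?_⟩
  · by_contra! hne
    exact (hX.facet_pos hne.1 hne.2).ne' h
  · rintro (rfl | rfl)
    exacts [facet_self X j, facet_succ X i]

lemma facet_vertex_nonneg (hX : IsConvexPolygon X) (i j : Fin (n + 1)) :
    0 ≤ facet X i (X j) := by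
  by_cases h : facet X i (X j) = 0
  · exact h.ge
  · rw [hX.facet_vertex_eq_zero_iff, not_or] at h
    exact (hX.facet_pos h.1 h.2).le

lemma facet_nonneg (hX : IsConvexPolygon X) (i : Fin (n + 1)) (hy : y ∈ vertexCone X) :
    0 ≤ facet X i y := by
  induction hy using Submodule.span_induction with
  | mem y hy =>
    obtain ⟨j, rfl⟩ := hy
    exact hX.facet_vertex_nonneg i j
  | zero => simp
  | add y z _ _ hy hz => simpa using add_nonneg hy hz
  | smul c y _ hy =>
    rw [Nonneg.mk_smul, map_smul]
    exact mul_nonneg c.2 hy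

lemma mem_vertexCone_of_fan (hX : IsConvexPolygon X) {j : Fin n} (hj : 0 < j.castSucc)
    (hleft : 0 ≤ triple (X 0) (X j.castSucc) y) (hright : triple (X 0) (X j.succ) y ≤ 0)
    (hside : 0 ≤ facet X j.castSucc y) : y ∈ vertexCone X := by
  have hpos := hX.triple_pos _ _ _ hj (Fin.castSucc_lt_succ (i := j))
  have hmem : triple (X 0) (X j.castSucc) (X j.succ) • y ∈ vertexCone X := by
    rw [facet, Fin.coeSucc_eq_succ] at hside
    rw [triple_swap] at hright
    rw [triple_smul_eq]
    exact add_mem (add_mem (PointedCone.smul_mem _ hside (vertex_mem_vertexCone X _))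
      (PointedCone.smul_mem _ (by linarith) (vertex_mem_vertexCone X _)))
      (PointedCone.smul_mem _ hleft (vertex_mem_vertexCone X _))
  simpa [smul_smul, hpos.ne'] using PointedCone.smul_mem _ (inv_pos.2 hpos).le hmem

lemma mem_vertexCone_iff (hX : IsConvexPolygon X) :
    y ∈ vertexCone X ↔ ∀ i, 0 ≤ facet X i y := by
  refine ⟨fun hy i => hX.facet_nonneg i hy, fun hy => ?_⟩
  obtain ⟨k, rfl⟩ := Nat.exists_eq_add_of_le' hX.two_le
  by_contra hmem
  have hfan (j : Fin (k + 2)) : 0 ≤ triple (X 0) (X j.succ) y := by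
    induction j using Fin.induction with
    | zero => simpa [facet] using hy 0
    | succ j ih =>
      rw [Fin.succ_castSucc] at ih
      by_contra! hneg
      exact hmem (hX.mem_vertexCone_of_fan (Fin.castSucc_pos_iff.2 (Fin.succ_pos j)) ih hneg.le
        (hy _))
  have hleft := hfan (Fin.last k).castSucc
  have hright := hy (Fin.last (k + 2))
  rw [Fin.succ_castSucc, Fin.succ_last] at hleft
  rw [facet, Fin.last_add_one, triple_swap, ← Fin.succ_last] at hright
  exact hmem (hX.mem_vertexCone_of_fan (Fin.castSucc_pos_iff.2 Fin.last_pos) hleft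
    (neg_nonneg.1 hright) (hy _))

lemma mem_interior_iff (hX : IsConvexPolygon X) :
    y ∈ interior (vertexCone X : Set (Fin 3 → ℝ)) ↔ ∀ i, 0 < facet X i y := by
  constructor
  · intro hy i
    refine (dominates_of_mem_interior hy (X (i + 1 + 1))).apply_pos
      (fun z hz => hX.facet_nonneg i hz) (hX.facet_pos (hX.add_one_add_one_ne_self i) ?_)
    exact hX.add_one_ne_self (i + 1)
  · intro hy
    have hopen : IsOpen {y | ∀ i, 0 < facet X i y} := by
      simp only [ofPred_forall]
      exact isOpen_iInter_of_finite fun i =>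
        isOpen_lt continuous_const (facet X i).continuous_of_finiteDimensional
    exact interior_maximal (fun z hz => hX.mem_vertexCone_iff.2 fun i => (hz i).le) hopen hy

lemma exists_eq_add_of_facet_eq_zero (hX : IsConvexPolygon X) (hy : y ∈ vertexCone X)
    (h : facet X i y = 0) : ∃ p q : ℝ, 0 ≤ p ∧ 0 ≤ q ∧ y = p • X i + q • X (i + 1) := by
  obtain ⟨c, rfl⟩ := (Submodule.mem_span_range_iff_exists_fun _).1 hy
  rw [map_sum, Finset.sum_eq_zero_iff_of_nonneg fun j _ =>
    hX.facet_nonneg i (Submodule.smul_mem _ (c j) (vertex_mem_vertexCone X j))] at h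
  refine ⟨c i, c (i + 1), (c i).2, (c (i + 1)).2,
    Fintype.sum_eq_add _ _ (hX.add_one_ne_self i).symm fun j hj => ?_⟩
  have hcj := h j (Finset.mem_univ j)
  rw [Nonneg.mk_smul, map_smul, smul_eq_zero_iff_left (hX.facet_pos hj.1 hj.2).ne'] at hcj
  rw [show c j = 0 from Subtype.ext hcj, zero_smul]

lemma exists_eq_smul_of_facet_eq_zero (hX : IsConvexPolygon X) (hy : y ∈ vertexCone X)
    (h : facet X i y = 0) (h' : facet X (i + 1) y = 0) : ∃ q : ℝ, y = q • X (i + 1) := by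
  obtain ⟨p, q, -, -, rfl⟩ := hX.exists_eq_add_of_facet_eq_zero hy h
  have hpos : 0 < facet X (i + 1) (X i) :=
    hX.facet_pos (hX.add_one_ne_self i).symm (hX.add_one_add_one_ne_self i).symm
  have hp : p = 0 := by
    simpa [facet_self, hpos.ne'] using h'
  exact ⟨q, by simp [hp]⟩

lemma onRay_or_onEdge (hX : IsConvexPolygon X) (hy : y ∈ vertexCone X) (hy0 : y ≠ 0)
    (hint : y ∉ interior (vertexCone X : Set (Fin 3 → ℝ))) :
    (∃ j, OnRay X j y) ∨ ∃ j, OnEdge X j y := by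
  rw [hX.mem_interior_iff] at hint
  push Not at hint
  obtain ⟨i, hi⟩ := hint
  obtain ⟨p, q, hp, hq, rfl⟩ :=
    hX.exists_eq_add_of_facet_eq_zero hy (hi.antisymm (hX.facet_nonneg i hy))
  rcases hp.eq_or_lt with rfl | hp
  · refine .inl ⟨i + 1, q, hq.lt_of_ne' ?_, by simp⟩
    rintro rfl
    simp at hy0
  rcases hq.eq_or_lt with rfl | hq
  · exact .inl ⟨i, p, hp, by simp⟩
  · exact .inr ⟨i, p, q, hp, hq, rfl⟩

end IsConvexPolygon

lemma OnRay.facet_eq_zero_iff (hX : IsConvexPolygon X) (hy : OnRay X j y) :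
    facet X i y = 0 ↔ j = i ∨ j = i + 1 := by
  obtain ⟨p, hp, rfl⟩ := hy
  rw [← hX.facet_vertex_eq_zero_iff, map_smul, smul_eq_zero_iff_right hp.ne']

namespace OnEdge

lemma mem_vertexCone (h : OnEdge X j y) : y ∈ vertexCone X := by
  obtain ⟨p, q, hp, hq, rfl⟩ := h
  exact add_mem (PointedCone.smul_mem _ hp.le (vertex_mem_vertexCone X _))
    (PointedCone.smul_mem _ hq.le (vertex_mem_vertexCone X _))

lemma facet_eq_zero (h : OnEdge X j y) : facet X j y = 0 := by
  obtain ⟨p, q, -, -, rfl⟩ := h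
  simp [facet_self, facet_succ]

lemma eq_of_facet_eq_zero (hX : IsConvexPolygon X) (hy : OnEdge X j y)
    (h : facet X i y = 0) : i = j := by
  have hleft := hy.dominates_left.apply_eq_zero (fun z hz => hX.facet_nonneg i hz)
    (vertex_mem_vertexCone X j) h
  have hright := hy.dominates_right.apply_eq_zero (fun z hz => hX.facet_nonneg i hz)
    (vertex_mem_vertexCone X (j + 1)) h
  rw [hX.facet_vertex_eq_zero_iff] at hleft hright
  rcases hleft with rfl | rfl
  · rfl
  · exact (hright.elim (hX.add_one_add_one_ne_self i) (hX.add_one_ne_self _)).elim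

lemma dominates_of_facet_eq_zero (hX : IsConvexPolygon X) (hz : OnEdge X i z)
    (hy : y ∈ vertexCone X) (h : facet X i y = 0) : Dominates (vertexCone X) z y := by
  have hsum : OnEdge X i (y + z) := by
    obtain ⟨a, b, ha, hb, rfl⟩ := hX.exists_eq_add_of_facet_eq_zero hy h
    obtain ⟨p, q, hp, hq, rfl⟩ := hz
    exact ⟨a + p, b + q, by positivity, by positivity, by module⟩
  exact (hz.dominates hsum).trans (Dominates.add_left hz.mem_vertexCone)

variable {B : Matrix (Fin 3) (Fin 3) ℝ}

lemma facet_mulVec_eq_zero (hX : IsConvexPolygon X) (hB : KNonneg (vertexCone X) B)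
    (hz : OnEdge X i z) (hBz : facet X j (B *ᵥ z) = 0) (hy : y ∈ vertexCone X)
    (h : facet X i y = 0) : facet X j (B *ᵥ y) = 0 :=
  ((hz.dominates_of_facet_eq_zero hX hy h).mulVec hB).apply_eq_zero
    (fun _ hw => hX.facet_nonneg j hw) (hB _ hy) hBz

lemma det_eq_zero_of_onRay_mulVec (hX : IsConvexPolygon X) (hB : KNonneg (vertexCone X) B)
    (hz : OnEdge X i z) (hBz : OnRay X j (B *ᵥ z)) : B.det = 0 := by
  obtain ⟨j, rfl⟩ : ∃ k, j = k + 1 := ⟨j - 1, by simp⟩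
  have hparallel (y) (hy : y ∈ vertexCone X) (h : facet X i y = 0) :
      ∃ q : ℝ, B *ᵥ y = q • X (j + 1) :=
    hX.exists_eq_smul_of_facet_eq_zero (hB _ hy)
      (hz.facet_mulVec_eq_zero hX hB ((hBz.facet_eq_zero_iff hX).2 (.inr rfl)) hy h)
      (hz.facet_mulVec_eq_zero hX hB ((hBz.facet_eq_zero_iff hX).2 (.inl rfl)) hy h)
  obtain ⟨p, hp⟩ := hparallel _ (vertex_mem_vertexCone X i) (facet_self X i)
  obtain ⟨q, hq⟩ := hparallel _ (vertex_mem_vertexCone X (i + 1)) (facet_succ X i)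
  have hdet := triple_mulVec B (X i) (X (i + 1)) (X (i + 1 + 1))
  rw [hp, hq, triple_smul_smul_self, LinearMap.zero_apply] at hdet
  exact (mul_eq_zero.1 hdet.symm).resolve_right
    (hX.facet_pos (hX.add_one_add_one_ne_self i) (hX.add_one_ne_self (i + 1))).ne'

end OnEdge

end ConvexPolygon

lemma exists_constant_step_of_no_backtrack {G : Type*} [AddGroup G] {g : G} {s : ℕ → G} {n : ℕ}
    (hstep : ∀ k < n, s (k + 1) = s k + g ∨ s (k + 1) = s k + -g)
    (hback : ∀ k, k + 1 < n → s (k + 2) ≠ s k) :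
    ∃ e, (e = g ∨ e = -g) ∧ ∀ k < n, s (k + 1) = s k + e := by
  rcases n.eq_zero_or_pos with rfl | hn
  · exact ⟨g, .inl rfl, by simp⟩
  obtain ⟨e, he, he0⟩ : ∃ e, (e = g ∨ e = -g) ∧ s 1 = s 0 + e := by
    rcases hstep 0 hn with h | h
    exacts [⟨g, .inl rfl, h⟩, ⟨-g, .inr rfl, h⟩]
  refine ⟨e, he, fun k hk => ?_⟩
  induction k with
  | zero => exact he0
  | succ k ih =>
    have hne := hback k hk
    have hprev := ih (by omega)
    rcases he with rfl | rfl <;> rcases hstep (k + 1) hk with h | h <;> first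
      | exact h
      | exact absurd (by rw [h, hprev]; simp) hne

section BoundaryOrbit

variable {n : ℕ} {X : Fin (n + 1) → Fin 3 → ℝ} {B : Matrix (Fin 3) (Fin 3) ℝ} {x : Fin 3 → ℝ}

/-- A nonzero vector `x` in the cone over a convex polygon with `n + 1` vertices whose orbit under
a primitive matrix has not entered the interior of the cone by time `2 * n`, the largest time for
which this can happen. -/
structure IsBoundaryOrbit (X : Fin (n + 1) → Fin 3 → ℝ) (B : Matrix (Fin 3) (Fin 3) ℝ)
    (x : Fin 3 → ℝ) : Prop where
  isConvexPolygon : IsConvexPolygon X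
  kPrimitive : KPrimitive (vertexCone X) B
  mem : x ∈ vertexCone X
  ne_zero : x ≠ 0
  notMem_interior : ∀ k ≤ 2 * n, B ^ k *ᵥ x ∉ interior (vertexCone X : Set (Fin 3 → ℝ))

namespace IsBoundaryOrbit

lemma det_ne_zero (h : IsBoundaryOrbit X B x) : B.det ≠ 0 := fun hdet =>
  h.notMem_interior 3 (by have := h.isConvexPolygon.two_le; omega)
    (h.kPrimitive.pow_three_mulVec_mem_interior_of_det_eq_zero hdet h.mem h.ne_zero)

lemma not_dominates (h : IsBoundaryOrbit X B x) {k l : ℕ} (hkl : k < l) (hk : k ≤ 2 * n) :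
    ¬ Dominates (vertexCone X) (B ^ k *ᵥ x) (B ^ l *ᵥ x) := fun hdom =>
  h.notMem_interior k hk (h.kPrimitive.mem_interior_of_dominates h.mem h.ne_zero hkl hdom)

lemma pow_mulVec_mem (h : IsBoundaryOrbit X B x) (k : ℕ) : B ^ k *ᵥ x ∈ vertexCone X :=
  h.kPrimitive.1.pow k x h.mem

lemma pow_mulVec_ne_zero (h : IsBoundaryOrbit X B x) (k : ℕ) : B ^ k *ᵥ x ≠ 0 := by
  have hunit : IsUnit (B ^ k) :=
    ((isUnit_iff_isUnit_det B).2 h.det_ne_zero.isUnit).pow k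
  exact fun h0 => h.ne_zero (mulVec_injective_iff_isUnit.2 hunit (h0.trans (mulVec_zero _).symm))

lemma onRay_or_onEdge (h : IsBoundaryOrbit X B x) {k : ℕ} (hk : k ≤ 2 * n) :
    (∃ j, OnRay X j (B ^ k *ᵥ x)) ∨ ∃ j, OnEdge X j (B ^ k *ᵥ x) :=
  h.isConvexPolygon.onRay_or_onEdge (h.pow_mulVec_mem k) (h.pow_mulVec_ne_zero k)
    (h.notMem_interior k hk)

-- The pigeonhole principle: `n + 2` consecutive boundary points cannot all lie on open rays, nor
-- all on open edges, since two on the same ray or edge would dominate each other.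
lemma exists_not_of_dominates (h : IsBoundaryOrbit X B x)
    {R : Fin (n + 1) → (Fin 3 → ℝ) → Prop}
    (hR : ∀ j y z, R j y → R j z → Dominates (vertexCone X) y z) {a : ℕ} (ha : a ≤ n) :
    ∃ k, a ≤ k ∧ k ≤ a + n + 1 ∧ ∀ j, ¬ R j (B ^ k *ᵥ x) := by
  by_contra! hall
  choose s hs using fun i : Fin (n + 2) => hall (a + i) (by omega) (by omega)
  obtain ⟨i, i', hne, heq⟩ := Fintype.exists_ne_map_eq_of_card_lt s (by simp)
  wlog hlt : i < i' generalizing i i'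
  · exact this i' i hne.symm heq.symm (hne.lt_or_gt.resolve_left hlt)
  exact h.not_dominates (by omega) (by omega) (hR _ _ _ (hs i) (heq ▸ hs i'))

lemma exists_onEdge_add (h : IsBoundaryOrbit X B x) {e : Fin (n + 1)} {q : ℕ}
    (he : OnEdge X e (B ^ q *ᵥ x)) (i : ℕ) (hi : q + i ≤ 2 * n) :
    ∃ e', OnEdge X e' (B ^ (q + i) *ᵥ x) ∧
      ∀ p, facet X e (B ^ p *ᵥ x) = 0 → facet X e' (B ^ (p + i) *ᵥ x) = 0 := by
  induction i with
  | zero => exact ⟨e, he, fun _ hp => hp⟩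
  | succ i ih =>
    obtain ⟨e', he', hfacet⟩ := ih (by omega)
    rcases h.onRay_or_onEdge hi with ⟨j, hj⟩ | ⟨j, hj⟩ <;>
      rw [← add_assoc, pow_succ_mulVec] at hj ⊢
    · exact absurd (he'.det_eq_zero_of_onRay_mulVec h.isConvexPolygon h.kPrimitive.1 hj)
        h.det_ne_zero
    · refine ⟨j, hj, fun p hp => ?_⟩
      rw [← add_assoc, pow_succ_mulVec]
      exact he'.facet_mulVec_eq_zero h.isConvexPolygon h.kPrimitive.1 hj.facet_eq_zero
        (h.pow_mulVec_mem _) (hfacet p hp)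

lemma exists_onEdge (h : IsBoundaryOrbit X B x) {k : ℕ} (hk : n < k) (hk2 : k ≤ 2 * n) :
    ∃ j, OnEdge X j (B ^ k *ᵥ x) := by
  obtain ⟨l, -, hl, hray⟩ :=
    h.exists_not_of_dominates (R := OnRay X) (fun _ _ _ => OnRay.dominates _) n.zero_le
  obtain ⟨e, he⟩ := (h.onRay_or_onEdge (by omega)).resolve_left (not_exists.2 hray)
  obtain ⟨e', he', -⟩ := h.exists_onEdge_add he (k - l) (by omega)
  exact ⟨e', by rwa [Nat.add_sub_cancel' (by omega)] at he'⟩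

lemma exists_onRay_of_lt (h : IsBoundaryOrbit X B x) {k : ℕ} (hk : k < n) :
    ∃ j, OnRay X j (B ^ k *ᵥ x) := by
  refine (h.onRay_or_onEdge (by omega)).resolve_right fun ⟨e, he⟩ => ?_
  obtain ⟨l, hkl, hl, hedge⟩ :=
    h.exists_not_of_dominates (R := OnEdge X) (fun _ _ _ => OnEdge.dominates) hk.le
  obtain ⟨e', he', -⟩ := h.exists_onEdge_add he (l - k) (by omega)
  rw [Nat.add_sub_cancel' hkl] at he'
  exact hedge e' he'

lemma lt_of_facet_eq_zero (h : IsBoundaryOrbit X B x) {e : Fin (n + 1)} {p q : ℕ}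
    (he : OnEdge X e (B ^ q *ᵥ x)) (hpq : p < q) (hp : facet X e (B ^ p *ᵥ x) = 0) :
    p + 2 * n < 2 * q := by
  by_contra! hle
  obtain ⟨e', he', hfacet⟩ := h.exists_onEdge_add he (q - p) (by omega)
  have hq := hfacet p hp
  rw [Nat.add_sub_cancel' hpq.le] at hq
  obtain rfl := he.eq_of_facet_eq_zero h.isConvexPolygon hq
  exact h.not_dominates (by omega) (by omega) (he.dominates he')

lemma eq_of_onRay (h : IsBoundaryOrbit X B x) {j : Fin (n + 1)} {k l : ℕ} (hk : k ≤ 2 * n)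
    (hl : l ≤ 2 * n) (hjk : OnRay X j (B ^ k *ᵥ x)) (hjl : OnRay X j (B ^ l *ᵥ x)) : k = l := by
  by_contra hne
  wlog hlt : k < l generalizing k l
  · exact this hl hk hjl hjk (Ne.symm hne) (by omega)
  exact h.not_dominates hlt hk (hjk.dominates _ hjl)

-- If the orbit were on a side at time `n`, the `n` vertices visited before would avoid both ends
-- of that side.
lemma exists_onRay (h : IsBoundaryOrbit X B x) {k : ℕ} (hk : k ≤ n) :
    ∃ j, OnRay X j (B ^ k *ᵥ x) := by
  rcases hk.lt_or_eq with hk | rfl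
  · exact h.exists_onRay_of_lt hk
  have hX := h.isConvexPolygon
  refine (h.onRay_or_onEdge (by omega)).resolve_right fun ⟨e, he⟩ => ?_
  choose s hs using fun i : Fin k => h.exists_onRay_of_lt i.2
  have hinj : Function.Injective s := fun i i' heq =>
    Fin.ext (h.eq_of_onRay (by omega) (by omega) (hs i) (heq ▸ hs i'))
  have havoid (i) (_ : i ∈ Finset.univ) : s i ∈ ({e, e + 1} : Finset (Fin (k + 1)))ᶜ := by
    rw [Finset.mem_compl, Finset.mem_insert, Finset.mem_singleton,
      ← (hs i).facet_eq_zero_iff hX]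
    intro hzero
    have := h.lt_of_facet_eq_zero he i.2 hzero
    omega
  have hcard := Finset.card_le_card_of_injOn s havoid hinj.injOn
  rw [Finset.card_univ, Finset.card_compl, Finset.card_pair (hX.add_one_ne_self e).symm,
    Fintype.card_fin, Fintype.card_fin] at hcard
  have := hX.two_le
  omega

lemma exists_itinerary (h : IsBoundaryOrbit X B x) :
    ∃ s : ℕ → Fin (n + 1), (∀ k ≤ n, OnRay X (s k) (B ^ k *ᵥ x)) ∧ ∀ j, ∃ k ≤ n, s k = j := by
  choose! s hs using fun k => h.exists_onRay (k := k)
  have hinj : Function.Injective fun k : Fin (n + 1) => s k := fun k l (heq : s k = s l) =>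
    Fin.ext (h.eq_of_onRay (by omega) (by omega) (hs k k.is_le) (heq ▸ hs l l.is_le))
  refine ⟨s, hs, fun j => ?_⟩
  obtain ⟨k, hk⟩ := Finite.surjective_of_injective hinj j
  exact ⟨k, k.is_le, hk⟩

lemma exists_onEdge_facet_zero_one (h : IsBoundaryOrbit X B x) :
    ∃ e, OnEdge X e (B ^ (n + 1) *ᵥ x) ∧ facet X e (B ^ 0 *ᵥ x) = 0 ∧
      facet X e (B ^ 1 *ᵥ x) = 0 := by
  have hX := h.isConvexPolygon
  have hn := hX.two_le
  obtain ⟨e, he⟩ := h.exists_onEdge n.lt_succ_self (by omega)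
  obtain ⟨s, hs, hsurj⟩ := h.exists_itinerary
  obtain ⟨k, hk, rfl⟩ := hsurj e
  obtain ⟨l, hl, hsl⟩ := hsurj (s k + 1)
  have hfk := ((hs k hk).facet_eq_zero_iff (i := s k) hX).2 (.inl rfl)
  have hfl := ((hs l hl).facet_eq_zero_iff (i := s k) hX).2 (.inr hsl)
  have hk1 := h.lt_of_facet_eq_zero he (by omega) hfk
  have hl1 := h.lt_of_facet_eq_zero he (by omega) hfl
  have hkl : k ≠ l := by
    rintro rfl
    exact hX.add_one_ne_self _ hsl.symm
  obtain ⟨rfl, rfl⟩ | ⟨rfl, rfl⟩ : k = 0 ∧ l = 1 ∨ k = 1 ∧ l = 0 := by omega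
  exacts [⟨_, he, hfk, hfl⟩, ⟨_, he, hfl, hfk⟩]

lemma eq_add_one_or_eq_add_neg_one (h : IsBoundaryOrbit X B x) {s : ℕ → Fin (n + 1)}
    (hs : ∀ k ≤ n, OnRay X (s k) (B ^ k *ᵥ x)) {k : ℕ} (hk : k < n) :
    s (k + 1) = s k + 1 ∨ s (k + 1) = s k + -1 := by
  have hX := h.isConvexPolygon
  obtain ⟨e, he, h0, h1⟩ := h.exists_onEdge_facet_zero_one
  obtain ⟨e', -, hfacet⟩ := h.exists_onEdge_add he k (by omega)
  have hk0 := hfacet 0 h0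
  have hk1 := hfacet 1 h1
  rw [zero_add, (hs k hk.le).facet_eq_zero_iff hX] at hk0
  rw [add_comm, (hs (k + 1) hk).facet_eq_zero_iff hX] at hk1
  have hne : s (k + 1) ≠ s k := fun heq =>
    k.succ_ne_self (h.eq_of_onRay (by omega) (by omega) (hs (k + 1) hk) (heq ▸ hs k hk.le))
  rcases hk0 with h0 | h0 <;> rcases hk1 with h1 | h1
  · exact absurd (h1.trans h0.symm) hne
  · exact .inl (by rw [h0, h1])
  · exact .inr (by rw [h0, h1, add_neg_cancel_right])
  · exact absurd (h1.trans h0.symm) hne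

theorem exists_shift (h : IsBoundaryOrbit X B x) :
    ∃ l e : Fin (n + 1), (e = 1 ∨ e = -1) ∧ ∀ i ≠ l, OnRay X (i + e) (B *ᵥ X i) := by
  obtain ⟨s, hs, hsurj⟩ := h.exists_itinerary
  obtain ⟨e, he, hstep⟩ := exists_constant_step_of_no_backtrack
    (fun _ hk => h.eq_add_one_or_eq_add_neg_one hs hk) fun k hk heq => by
      have := h.eq_of_onRay (by omega) (by omega) (hs (k + 2) hk) (heq ▸ hs k (by omega))
      omega
  refine ⟨s n, e, he, fun i hi => ?_⟩
  obtain ⟨k, hk, rfl⟩ := hsurj i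
  have hkn : k < n := lt_of_le_of_ne hk (by rintro rfl; exact hi rfl)
  obtain ⟨p, hp, hvk⟩ := hs k hk
  obtain ⟨q, hq, hvk'⟩ := hs (k + 1) hkn
  refine ⟨p⁻¹ * q, by positivity, ?_⟩
  rw [mul_smul, ← hstep k hkn, ← hvk', pow_succ_mulVec, hvk, mulVec_smul, inv_smul_smul₀ hp.ne']

end IsBoundaryOrbit

end BoundaryOrbit

section CommonEigenvectors

variable {n : ℕ} {X : Fin (n + 1) → Fin 3 → ℝ} {A B C : Matrix (Fin 3) (Fin 3) ℝ}

lemma eigenvalue_eq_of_triple_ne_zero {a a' b c : Fin 3 → ℝ} {p p' q s : ℝ} (hq : q ≠ 0)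
    (hs : s ≠ 0) (hab : triple a b c ≠ 0) (hab' : triple a' b c ≠ 0) (ha : C *ᵥ a = p • a)
    (ha' : C *ᵥ a' = p' • a') (hb : C *ᵥ b = q • b) (hc : C *ᵥ c = s • c) : p = p' := by
  have hdet {a : Fin 3 → ℝ} {p : ℝ} (hab : triple a b c ≠ 0) (ha : C *ᵥ a = p • a) :
      C.det = q * s * p := by
    have h := triple_mulVec C b c a
    rw [ha, hb, hc] at h
    rw [triple_rotate] at hab
    refine mul_right_cancel₀ hab (h.symm.trans ?_)
    simp only [triple_apply, Pi.smul_apply, smul_eq_mul]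
    ring
  exact mul_left_cancel₀ (mul_ne_zero hq hs) ((hdet hab ha).symm.trans (hdet hab' ha'))

lemma eq_smul_one_of_triple_ne_zero {a b c : Fin 3 → ℝ} {p : ℝ} (habc : triple a b c ≠ 0)
    (ha : C *ᵥ a = p • a) (hb : C *ᵥ b = p • b) (hc : C *ᵥ c = p • c) : C = p • 1 := by
  refine ext_of_mulVec_single fun i => smul_right_injective _ habc ?_
  simp only [smul_mulVec, one_mulVec]
  rw [← mulVec_smul, smul_comm _ p, triple_smul_eq]
  simp only [mulVec_add, mulVec_smul, ha, hb, hc, smul_add, smul_comm _ p]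

lemma IsConvexPolygon.triple_ne_zero (hX : IsConvexPolygon X) {i j k : Fin (n + 1)}
    (hij : i ≠ j) (hik : i ≠ k) (hjk : j ≠ k) : triple (X i) (X j) (X k) ≠ 0 := by
  wlog hlt : j < k generalizing j k
  · rw [triple_rotate, triple_swap, neg_ne_zero, triple_rotate, triple_rotate]
    exact this hik hij hjk.symm (hjk.lt_or_gt.resolve_left hlt)
  rcases hij.lt_or_gt with hij | hji
  · exact (hX.triple_pos _ _ _ hij hlt).ne'
  rcases hik.lt_or_gt with hik | hki
  · rw [triple_swap, neg_ne_zero]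
    exact (hX.triple_pos _ _ _ hji hik).ne'
  · rw [triple_rotate]
    exact (hX.triple_pos _ _ _ hlt hki).ne'

lemma IsConvexPolygon.exists_eq_smul_one (hX : IsConvexPolygon X) {S : Finset (Fin (n + 1))}
    (hS : 4 ≤ S.card) (hC : ∀ i ∈ S, OnRay X i (C *ᵥ X i)) : ∃ c : ℝ, 0 < c ∧ C = c • 1 := by
  choose! μ hpos hμ using hC
  have heq (i) (hi : i ∈ S) (j) (hj : j ∈ S) : μ i = μ j := by
    obtain ⟨k, hk, l, hl, hkl⟩ : ∃ k ∈ (S.erase i).erase j, ∃ l ∈ (S.erase i).erase j, k ≠ l := by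
      refine Finset.one_lt_card.1 ?_
      have h₁ := Finset.pred_card_le_card_erase (s := S) (a := i)
      have h₂ := Finset.pred_card_le_card_erase (s := S.erase i) (a := j)
      omega
    simp only [Finset.mem_erase] at hk hl
    exact eigenvalue_eq_of_triple_ne_zero (hpos k hk.2.2).ne' (hpos l hl.2.2).ne'
      (hX.triple_ne_zero hk.2.1.symm hl.2.1.symm hkl) (hX.triple_ne_zero hk.1.symm hl.1.symm hkl)
      (hμ i hi) (hμ j hj) (hμ k hk.2.2) (hμ l hl.2.2)
  obtain ⟨i, hi, j, hj, k, hk, hij, hik, hjk⟩ := Finset.two_lt_card.1 (show 2 < S.card by omega)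
  exact ⟨μ i, hpos i hi, eq_smul_one_of_triple_ne_zero (hX.triple_ne_zero hij hik hjk)
    (hμ i hi) (heq i hi j hj ▸ hμ j hj) (heq i hi k hk ▸ hμ k hk)⟩

lemma OnRay.mulVec {i j : Fin (n + 1)} {y : Fin 3 → ℝ} (hy : OnRay X i y)
    (hB : OnRay X j (B *ᵥ X i)) : OnRay X j (B *ᵥ y) := by
  obtain ⟨p, hp, rfl⟩ := hy
  obtain ⟨q, hq, hB⟩ := hB
  exact ⟨p * q, mul_pos hp hq, by rw [mulVec_smul, hB, mul_smul]⟩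

lemma OnRay.inv_mulVec {i j : Fin (n + 1)} (hdet : IsUnit B.det) (h : OnRay X j (B *ᵥ X i)) :
    OnRay X i (B⁻¹ *ᵥ X j) := by
  obtain ⟨p, hp, h⟩ := h
  refine ⟨p⁻¹, inv_pos.2 hp, ?_⟩
  rw [← inv_smul_smul₀ hp.ne' (X j), ← h, mulVec_smul, mulVec_mulVec, nonsing_inv_mul B hdet,
    one_mulVec]

theorem IsConvexPolygon.exists_eq_smul_of_lt_expnt (hX : IsConvexPolygon X) (hn : 5 ≤ n)
    {l₀ j : Fin (n + 1)} (hA : ∀ i ≠ l₀, OnRay X (i + 1) (A *ᵥ X i))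
    (hAl₀ : OnEdge X j (A *ᵥ X l₀)) (hB : KPrimitive (vertexCone X) B)
    (hexp : 2 * n < expnt (vertexCone X : Set (Fin 3 → ℝ)) B) :
    ∃ c : ℝ, 0 < c ∧ B = c • A := by
  have hcard (a b : Fin (n + 1)) : 4 ≤ ({a, b}ᶜ : Finset (Fin (n + 1))).card := by
    rw [Finset.card_compl, Fintype.card_fin]
    have := Finset.card_le_two (a := a) (b := b)
    omega
  obtain ⟨x, ⟨i, rfl⟩, hx⟩ :=
    exists_forall_le_notMem_interior_of_lt_expnt hB (N := 2 * n) (by omega) hexp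
  have horbit : IsBoundaryOrbit X B (X i) :=
    ⟨hX, hB, vertex_mem_vertexCone X i, hX.vertex_ne_zero i, hx⟩
  have hdet := horbit.det_ne_zero.isUnit
  obtain ⟨l, e, rfl | rfl, hshift⟩ := horbit.exists_shift
  · obtain ⟨c, hc, hBA⟩ := hX.exists_eq_smul_one (C := B⁻¹ * A) (hcard l l₀) fun i hi => by
      simp only [Finset.mem_compl, Finset.mem_insert, Finset.mem_singleton, not_or] at hi
      rw [← mulVec_mulVec]
      exact (hA i hi.2).mulVec ((hshift i hi.1).inv_mulVec hdet)
    refine ⟨c⁻¹, inv_pos.2 hc, ?_⟩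
    rw [eq_inv_smul_iff₀ hc.ne', ← mul_nonsing_inv_cancel_left B A hdet, hBA,
      mul_smul_comm, mul_one]
  · obtain ⟨c, hc, hBA⟩ := hX.exists_eq_smul_one (C := B * A) (hcard l₀ (l - 1)) fun i hi => by
      simp only [Finset.mem_compl, Finset.mem_insert, Finset.mem_singleton, not_or] at hi
      rw [← mulVec_mulVec]
      have hback := hshift (i + 1) fun heq => hi.2 (eq_sub_of_add_eq heq)
      rw [add_neg_cancel_right] at hback
      exact (hA i hi.1).mulVec hback
    have hray : OnRay X l₀ (B *ᵥ (A *ᵥ X l₀)) :=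
      ⟨c, hc, by rw [mulVec_mulVec, hBA, smul_mulVec, one_mulVec]⟩
    exact absurd (hAl₀.det_eq_zero_of_onRay_mulVec hX hB.1 hray) horbit.det_ne_zero

end CommonEigenvectors

section Inequalities

lemma mul_sin_lt_mul_sin {x y : ℝ} (hx : 0 < x) (hxy : x < y) (hy : y ≤ π) :
    x * Real.sin y < y * Real.sin x := by
  have hy0 : 0 < y := hx.trans hxy
  have hconc := strictConcaveOn_sin_Icc.2 (left_mem_Icc.2 pi_nonneg) ⟨hy0.le, hy⟩ hy0.ne
    (sub_pos.2 ((div_lt_one hy0).2 hxy)) (div_pos hx hy0) (sub_add_cancel 1 _)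
  rw [smul_zero, Real.sin_zero, smul_zero, zero_add, zero_add, smul_eq_mul, smul_eq_mul,
    div_mul_cancel₀ x hy0.ne', div_mul_eq_mul_div, div_lt_iff₀' hy0] at hconc
  exact hconc

lemma add_mul_pow_le_add_mul_pow_add {r : ℝ} (hr : 0 ≤ r) (a : ℕ) {b : ℕ} (hb : 0 < b) :
    (a + b) * r ^ b ≤ a + b * r ^ (a + b) := by
  have hab : (0 : ℝ) < a + b := by positivity
  have hroot : (r ^ (a + b)) ^ (b / (a + b) : ℝ) = r ^ b := by
    rw [← Real.rpow_natCast, ← Real.rpow_mul hr, Nat.cast_add, mul_div_cancel₀ _ hab.ne',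
      Real.rpow_natCast]
  have hamgm := Real.geom_mean_le_arith_mean2_weighted (w₁ := a / (a + b)) (w₂ := b / (a + b))
    (by positivity) (by positivity) zero_le_one (pow_nonneg hr (a + b)) (by field_simp)
  rw [Real.one_rpow, one_mul, mul_one, hroot] at hamgm
  calc (a + b) * r ^ b
      ≤ (a + b) * (a / (a + b) + b / (a + b) * r ^ (a + b)) := by gcongr
    _ = a + b * r ^ (a + b) := by field_simp

end Inequalities

section Spiral

variable {r θ : ℝ} {n : ℕ}

lemma Atheta_mulVec_xvec (r θ : ℝ) (k : ℕ) : Atheta r θ *ᵥ xvec r θ k = xvec r θ (k + 1) := by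
  simp only [Atheta, xvec, cons_mulVec, empty_mulVec, vec3_dotProduct', Nat.cast_add, Nat.cast_one,
    add_mul, one_mul, Real.cos_add, Real.sin_add, pow_succ]
  refine vec3_eq ?_ ?_ ?_ <;> ring

lemma onRay_Atheta_mulVec (r θ : ℝ) {i : Fin (n + 1)} (hi : i ≠ Fin.last n) :
    OnRay (fun j : Fin (n + 1) => xvec r θ j) (i + 1) (Atheta r θ *ᵥ xvec r θ i) := by
  refine ⟨1, one_pos, ?_⟩
  beta_reduce
  rw [Atheta_mulVec_xvec, one_smul, Fin.val_add_one_of_lt (Fin.lt_last_iff_ne_last.2 hi)]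

lemma det_Atheta (r θ : ℝ) : (Atheta r θ).det = r ^ 2 := by
  simp only [Atheta, det_fin_three, of_apply, cons_val]
  linear_combination r ^ 2 * Real.cos_sq_add_sin_sq θ

lemma triple_xvec_add (r θ : ℝ) (s i j k : ℕ) :
    triple (xvec r θ (s + i)) (xvec r θ (s + j)) (xvec r θ (s + k))
      = (r ^ 2) ^ s * triple (xvec r θ i) (xvec r θ j) (xvec r θ k) := by
  induction s with
  | zero => simp
  | succ s ih =>
    simp only [add_right_comm s 1, ← Atheta_mulVec_xvec]
    rw [triple_mulVec, ih, det_Atheta]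
    ring

lemma triple_xvec_zero (r θ : ℝ) (a b : ℕ) :
    triple (xvec r θ 0) (xvec r θ a) (xvec r θ (a + b))
      = r ^ a * (Real.sin (a * θ) + r ^ (a + b) * Real.sin (b * θ)
        - r ^ b * Real.sin ((a + b) * θ)) := by
  have hsub : Real.sin (b * θ) = Real.sin ((a + b) * θ - a * θ) := by ring_nf
  rw [hsub, Real.sin_sub]
  simp only [triple_apply, xvec, cons_val, pow_zero, Nat.cast_zero, zero_mul, Real.cos_zero,
    Real.sin_zero, Nat.cast_add, pow_add]
  ring

lemma pow_mul_sin_lt_of_add_le_pi {a b : ℕ} (ha : 0 < a) (hb : 0 < b) (hr : 0 < r) (hθ : 0 < θ)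
    (hab : (a + b) * θ ≤ π) :
    r ^ b * Real.sin ((a + b) * θ) < Real.sin (a * θ) + r ^ (a + b) * Real.sin (b * θ) := by
  have ha0 : (0 : ℝ) < a := by exact_mod_cast ha
  have hb0 : (0 : ℝ) < b := by exact_mod_cast hb
  have hsin : 0 ≤ Real.sin ((a + b) * θ) := Real.sin_nonneg_of_nonneg_of_le_pi (by positivity) hab
  have hsina := mul_sin_lt_mul_sin (x := a * θ) (by positivity) (by nlinarith) hab
  have hsinb := mul_sin_lt_mul_sin (x := b * θ) (by positivity) (by nlinarith) hab
  refine lt_of_mul_lt_mul_left (a := (a + b) * θ) ?_ (by positivity)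
  calc (a + b) * θ * (r ^ b * Real.sin ((a + b) * θ))
      = θ * Real.sin ((a + b) * θ) * ((a + b) * r ^ b) := by ring
    _ ≤ θ * Real.sin ((a + b) * θ) * (a + b * r ^ (a + b)) := by
        gcongr
        exact add_mul_pow_le_add_mul_pow_add hr.le a hb
    _ = a * θ * Real.sin ((a + b) * θ) + r ^ (a + b) * (b * θ * Real.sin ((a + b) * θ)) := by ring
    _ < (a + b) * θ * Real.sin (a * θ) + r ^ (a + b) * ((a + b) * θ * Real.sin (b * θ)) := by
        gcongr
    _ = (a + b) * θ * (Real.sin (a * θ) + r ^ (a + b) * Real.sin (b * θ)) := by ring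

lemma triple_xvec_zero_pos_of_le_pi {a b : ℕ} (ha : 0 < a) (hb : 0 < b) (hr : 0 < r) (hθ : 0 < θ)
    (haθ : a * θ ≤ π) (hbθ : b * θ ≤ π) (habθ : (a + b) * θ < 2 * π) :
    0 < triple (xvec r θ 0) (xvec r θ a) (xvec r θ (a + b)) := by
  rw [triple_xvec_zero]
  refine mul_pos (pow_pos hr a) (sub_pos.2 ?_)
  rcases le_or_gt ((a + b) * θ) π with hle | hgt
  · exact pow_mul_sin_lt_of_add_le_pi ha hb hr hθ hle
  · have hsina : 0 ≤ Real.sin (a * θ) := Real.sin_nonneg_of_nonneg_of_le_pi (by positivity) haθ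
    have hsinb : 0 ≤ Real.sin (b * θ) := Real.sin_nonneg_of_nonneg_of_le_pi (by positivity) hbθ
    have hsin : Real.sin ((a + b) * θ) < 0 := by
      rw [← Real.sin_sub_two_pi]
      exact Real.sin_neg_of_neg_of_neg_pi_lt (by linarith) (by linarith)
    exact (mul_neg_of_pos_of_neg (pow_pos hr b) hsin).trans_le (by positivity)

/-- The spiral `x_0, x_1, …` with ratio `r` and angle `θ` closes up after `n + 1` steps: `n` steps
make less than a full turn, `n + 1` steps make more, and `r` is the root of `g_θ` (with
`m = n + 1`), which puts `x_{n+1}` on the side from `x_0` to `x_1`. -/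
structure IsClosingSpiral (n : ℕ) (r θ : ℝ) : Prop where
  two_le : 2 ≤ n
  pos : 0 < r
  mul_lt_two_pi : n * θ < 2 * π
  two_pi_lt_mul : 2 * π < (n + 1) * θ
  root : gpoly (n + 1) θ r = 0

namespace IsClosingSpiral

lemma angle_pos (h : IsClosingSpiral n r θ) : 0 < θ := by
  have := h.two_pi_lt_mul
  exact pos_of_mul_pos_right (pi_pos.trans (by linarith [pi_pos])) (by positivity : 0 ≤ (n : ℝ) + 1)

lemma angle_lt_pi (h : IsClosingSpiral n r θ) : θ < π := by
  have h2 : (2 : ℝ) ≤ n := by exact_mod_cast h.two_le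
  nlinarith [h.mul_lt_two_pi, h.angle_pos]

lemma exists_xvec_eq (h : IsClosingSpiral n r θ) :
    ∃ p q : ℝ, 0 < p ∧ 0 < q ∧ xvec r θ (n + 1) = p • xvec r θ 0 + q • xvec r θ 1 := by
  have hθ := h.angle_pos
  have hr := h.pos
  have hsinθ : 0 < Real.sin θ := Real.sin_pos_of_pos_of_lt_pi hθ h.angle_lt_pi
  have hsinn : Real.sin (n * θ) < 0 := by
    rw [← Real.sin_sub_two_pi]
    exact Real.sin_neg_of_neg_of_neg_pi_lt (by linarith [h.mul_lt_two_pi])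
      (by linarith [h.two_pi_lt_mul, h.angle_lt_pi])
  have hsinn1 : 0 < Real.sin ((n + 1) * θ) := by
    rw [← Real.sin_sub_two_pi]
    exact Real.sin_pos_of_pos_of_lt_pi (by linarith [h.two_pi_lt_mul])
      (by linarith [h.mul_lt_two_pi, h.angle_lt_pi])
  refine ⟨-Real.sin (n * θ) / Real.sin θ * r ^ (n + 1), Real.sin ((n + 1) * θ) / Real.sin θ * r ^ n,
    mul_pos (div_pos (neg_pos.2 hsinn) hsinθ) (pow_pos hr _), by positivity, ?_⟩
  have hroot := h.root
  have hsub : Real.sin (n * θ) = Real.sin ((n + 1) * θ - θ) := by ring_nf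
  simp only [gpoly, Nat.cast_add, Nat.cast_one, add_sub_cancel_right, Nat.add_sub_cancel] at hroot
  rw [hsub, Real.sin_sub] at hroot ⊢
  simp only [xvec, smul_vec3, vec3_add, smul_eq_mul, pow_zero, pow_one, Nat.cast_add, Nat.cast_one,
    Nat.cast_zero, zero_mul, one_mul, mul_one, mul_zero, Real.cos_zero, Real.sin_zero]
  refine vec3_eq ?_ ?_ ?_
  · field_simp
    ring
  · field_simp
    ring
  · linear_combination hroot

lemma add_mul_lt_two_pi (h : IsClosingSpiral n r θ) {a b : ℕ} (hab : a + b ≤ n) :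
    (a + b) * θ < 2 * π := by
  have hab' : (a + b : ℝ) ≤ n := by exact_mod_cast hab
  exact (mul_le_mul_of_nonneg_right hab' h.angle_pos.le).trans_lt h.mul_lt_two_pi

lemma mul_le_pi_of_pi_lt_mul (h : IsClosingSpiral n r θ) {a b : ℕ} (hab : a + b ≤ n)
    (hb : π < b * θ) : a * θ ≤ π := by
  linarith [h.add_mul_lt_two_pi hab, add_mul (a : ℝ) b θ]

-- Applying `A_θ ^ (c + 1)` to the three vectors moves the last one beyond the polygon, to a point
-- of the side from `x_0` to `x_1`, and so trades the index gap `b` for the complementary gap.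
lemma triple_zero_pos_of_complement {a b c : ℕ} (h : IsClosingSpiral (a + b + c) r θ)
    (hpos : ∀ k, 0 < k → k ≤ c + 1 → 0 < triple (xvec r θ 0) (xvec r θ k) (xvec r θ (k + a))) :
    0 < triple (xvec r θ 0) (xvec r θ a) (xvec r θ (a + b)) := by
  have hr := h.pos
  obtain ⟨p, q, hp, hq, hclose⟩ := h.exists_xvec_eq
  have hfirst := hpos (c + 1) c.succ_pos le_rfl
  have hsecond : 0 ≤ triple (xvec r θ 1) (xvec r θ (c + 1)) (xvec r θ (c + 1 + a)) := by
    have hshift := triple_xvec_add r θ 1 0 c (c + a)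
    rw [add_zero, ← add_assoc, add_comm 1 c] at hshift
    rw [hshift]
    rcases c.eq_zero_or_pos with rfl | hc
    · rw [triple_self, LinearMap.zero_apply, mul_zero]
    · exact (mul_pos (by positivity) (hpos c hc c.le_succ)).le
  have hrotate := triple_xvec_add r θ (c + 1) 0 a (a + b)
  rw [show c + 1 + (a + b) = a + b + c + 1 by ring, hclose, map_add, map_smul, map_smul, add_zero,
    ← triple_rotate (xvec r θ 0), ← triple_rotate (xvec r θ 1), smul_eq_mul, smul_eq_mul]
    at hrotate
  refine pos_of_mul_pos_right (hrotate ▸ ?_) (by positivity : 0 ≤ (r ^ 2) ^ (c + 1))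
  positivity

lemma triple_zero_pos_of_mul_le_pi (h : IsClosingSpiral n r θ) {a b : ℕ} (ha : 0 < a) (hb : 0 < b)
    (hab : a + b ≤ n) (haθ : a * θ ≤ π) :
    0 < triple (xvec r θ 0) (xvec r θ a) (xvec r θ (a + b)) := by
  rcases le_or_gt (b * θ) π with hbθ | hbθ
  · exact triple_xvec_zero_pos_of_le_pi ha hb h.pos h.angle_pos haθ hbθ (h.add_mul_lt_two_pi hab)
  obtain ⟨c, rfl⟩ := Nat.exists_eq_add_of_le hab
  exact h.triple_zero_pos_of_complement fun k hk hkc =>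
    triple_xvec_zero_pos_of_le_pi hk ha h.pos h.angle_pos
      (h.mul_le_pi_of_pi_lt_mul (by omega) hbθ) haθ (h.add_mul_lt_two_pi (by omega))

lemma triple_zero_pos (h : IsClosingSpiral n r θ) {a b : ℕ} (ha : 0 < a) (hb : 0 < b)
    (hab : a + b ≤ n) : 0 < triple (xvec r θ 0) (xvec r θ a) (xvec r θ (a + b)) := by
  rcases le_or_gt (a * θ) π with haθ | haθ
  · exact h.triple_zero_pos_of_mul_le_pi ha hb hab haθ
  obtain ⟨c, rfl⟩ := Nat.exists_eq_add_of_le hab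
  exact h.triple_zero_pos_of_complement fun k hk hkc =>
    h.triple_zero_pos_of_mul_le_pi hk ha (by omega) (h.mul_le_pi_of_pi_lt_mul (by omega) haθ)

lemma isConvexPolygon (h : IsClosingSpiral n r θ) :
    IsConvexPolygon fun j : Fin (n + 1) => xvec r θ j := by
  refine ⟨h.two_le, fun i j k hij hjk => ?_⟩
  rw [Fin.lt_def] at hij hjk
  have hshift := triple_xvec_add r θ i 0 (j - i) (j - i + (k - j))
  rw [add_zero, ← add_assoc, Nat.add_sub_cancel' hij.le, Nat.add_sub_cancel' hjk.le] at hshift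
  rw [hshift]
  exact mul_pos (pow_pos (pow_pos h.pos 2) _)
    (h.triple_zero_pos (by omega) (by omega) (by omega))

lemma onEdge_Atheta_mulVec (h : IsClosingSpiral n r θ) :
    OnEdge (fun j : Fin (n + 1) => xvec r θ j) 0 (Atheta r θ *ᵥ xvec r θ (Fin.last n)) := by
  obtain ⟨p, q, hp, hq, hclose⟩ := h.exists_xvec_eq
  have hone : ((0 + 1 : Fin (n + 1)) : ℕ) = 1 := by
    rw [zero_add, Fin.val_one', Nat.mod_eq_of_lt (by linarith [h.two_le])]
  refine ⟨p, q, hp, hq, ?_⟩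
  beta_reduce
  rw [Atheta_mulVec_xvec, Fin.val_last, hclose, Fin.val_zero, hone]

end IsClosingSpiral

end Spiral

/-- Let `m ≥ 6` and `θ ∈ (2π/m, 2π/(m-1))`, with `r = r_θ` the unique positive real root of
`g_θ`.  If `B` is `K_θ`-primitive with `γ(B) = 2m - 1`, then `B` is a positive scalar multiple
of `A_θ`. -/
theorem stmt_19 (m : ℕ) (hm : 6 ≤ m) (θ : ℝ)
    (hθ : θ ∈ Set.Ioo (2 * π / (m : ℝ)) (2 * π / ((m : ℝ) - 1)))
    (r : ℝ) (hr0 : 0 < r) (hroot : gpoly m θ r = 0)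
    (huniq : ∀ s : ℝ, 0 < s → gpoly m θ s = 0 → s = r)
    (B : Matrix (Fin 3) (Fin 3) ℝ)
    (hB : KPrimitive (Ktheta m r θ) B)
    (hγ : expnt (Ktheta m r θ) B = 2 * m - 1) :
    ∃ c : ℝ, 0 < c ∧ B = c • Atheta r θ := by
  obtain ⟨n, rfl⟩ : ∃ n, m = n + 1 := ⟨m - 1, by omega⟩
  have hm_pos : (0 : ℝ) < (n + 1 : ℕ) := by positivity
  have hn : (5 : ℝ) ≤ n := by exact_mod_cast Nat.le_of_succ_le_succ hm
  obtain ⟨hθ_lower, hθ_upper⟩ := hθ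
  rw [div_lt_iff₀' hm_pos, Nat.cast_succ] at hθ_lower
  rw [Nat.cast_succ, add_sub_cancel_right, lt_div_iff₀' (by linarith)] at hθ_upper
  have hspiral : IsClosingSpiral n r θ := ⟨by omega, hr0, hθ_upper, hθ_lower, hroot⟩
  rw [Ktheta, coneGen_eq_hull] at hB hγ
  exact hspiral.isConvexPolygon.exists_eq_smul_of_lt_expnt (by omega)
    (fun _ hi => onRay_Atheta_mulVec r θ hi) hspiral.onEdge_Atheta_mulVec hB
    (hγ ▸ (by omega))
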